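/- Let {G, (Γ0, Γ1), (Γ̃0, Γ̃1)} be a generalized boundary triple for the adjoint pair {S, S̃} with core {T, T̃} of {S*, S̃*}, and assume in addition that T = S* and T̃ = S̃* (i.e., the core coincides with the pair of adjoints). Then the joint boundary maps are surjective onto G × G: {(Γ0 f, Γ1 f) : f ∈ dom S*} = G × G and {(Γ̃0 g, Γ̃1 g) : g ∈ dom S̃*} = G × G. -/

import Mathlib

/-!
Let `A₀` and `Ã₀` be the restrictions of `T` to `ker Γ₀` and of `T̃` to `ker Γ̃₀`. Since `Γ₀` is
surjective, `(Γ₀, Γ₁)` is surjective as soon as `Γ₁` maps `ker Γ₀` onto `G`. By the Green identity,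
a vector `Γ̃₀ g` orthogonal to `Γ₁ (ker Γ₀)` has `g ∈ dom A₀* = dom Ã₀`, hence is zero. As the
Green identity also makes `g ↦ ⟪Γ̃₀ g, Γ₁ f⟫` continuous in the graph norm of `T̃` for
`f ∈ ker Γ₀`, the closed graph theorem shows that `Γ̃₀` is bounded on the graph of `T̃`, which is
complete because `T̃` is closed. The functional `g ↦ ⟪φ, Γ̃₀ g⟫` is therefore of the form
`⟪u, g⟫ + ⟪v, T̃ g⟫`. It vanishes on `ker Γ̃₀`, so `-v ∈ dom Ã₀* = dom A₀` with `A₀ (-v) = u`, and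
the Green identity gives `Γ₁ (-v) = φ`.
-/

open scoped ComplexInnerProductSpace

noncomputable section

/-- The inner product in the convention of the paper: linear in the *first* argument and
conjugate-linear in the second (the opposite of Mathlib's convention). -/
def pinner {E : Type*} [NormedAddCommGroup E] [InnerProductSpace ℂ E] (x y : E) : ℂ :=
  ⟪y, x⟫

variable {H G : Type*}
  [NormedAddCommGroup H] [InnerProductSpace ℂ H] [CompleteSpace H]
  [NormedAddCommGroup G] [InnerProductSpace ℂ G] [CompleteSpace G]

/-- The restriction of a partially defined linear operator `T` in `H` to a submodule `p` of its
domain, viewed again as a partially defined linear operator in `H`. -/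
def LinearPMap.restrictTo (T : H →ₗ.[ℂ] H) (p : Submodule ℂ T.domain) : H →ₗ.[ℂ] H where
  domain := p.map T.domain.subtype
  toFun := T.toFun ∘ₗ p.subtype ∘ₗ
    (Submodule.equivMapOfInjective T.domain.subtype (Submodule.injective_subtype _)
      p).symm.toLinearMap

/-- `R` is the (everywhere defined, bounded) resolvent of the operator `A` at the point `lam`,
i.e. `R` is a two-sided inverse of `A - lam`. -/
def ResolventAt (A : H →ₗ.[ℂ] H) (lam : ℂ) (R : H →L[ℂ] H) : Prop :=
  (∀ x : A.domain, R (A x - lam • (x : H)) = (x : H)) ∧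
  (∀ h : H, ∃ x : A.domain, (x : H) = R h ∧ A x - lam • (x : H) = h)

/-- `lam` belongs to the resolvent set of `A`: `A - lam` is a bijection of `dom A` onto `H`
with a bounded everywhere defined inverse. -/
def InResolventSet (A : H →ₗ.[ℂ] H) (lam : ℂ) : Prop :=
  ∃ R : H →L[ℂ] H, ResolventAt A lam R

/-- `{G, (Γ0, Γ1), (Γt0, Γt1)}` is a generalized boundary triple for the adjoint pair `{S, St}`
with core `{T, Tt}` of `{S*, St*}`. -/
structure IsGeneralizedBoundaryTriple (S St T Tt : H →ₗ.[ℂ] H)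
    (Γ0 Γ1 : T.domain →ₗ[ℂ] G) (Γt0 Γt1 : Tt.domain →ₗ[ℂ] G) : Prop where
  dense_S : Dense (S.domain : Set H)
  dense_St : Dense (St.domain : Set H)
  closed_S : S.IsClosed
  closed_St : St.IsClosed
  adjoint_pair : ∀ (f : S.domain) (g : St.domain),
    pinner (S f) (g : H) = pinner (f : H) (St g)
  T_le : T ≤ S.adjoint
  Tt_le : Tt ≤ St.adjoint
  T_adjoint : T.adjoint = S
  Tt_adjoint : Tt.adjoint = St
  green : ∀ (f : T.domain) (g : Tt.domain),
    pinner (T f) (g : H) - pinner (f : H) (Tt g)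
      = pinner (Γ1 f) (Γt0 g) - pinner (Γ0 f) (Γt1 g)
  surj_Γ0 : Function.Surjective Γ0
  surj_Γt0 : Function.Surjective Γt0
  A0_adjoint : (T.restrictTo (LinearMap.ker Γ0)).adjoint = Tt.restrictTo (LinearMap.ker Γt0)
  At0_adjoint : (Tt.restrictTo (LinearMap.ker Γt0)).adjoint = T.restrictTo (LinearMap.ker Γ0)

section General

variable {𝕜 E F : Type*} [RCLike 𝕜] [NormedAddCommGroup E] [NormedAddCommGroup F]
  [InnerProductSpace 𝕜 F]

theorem continuous_of_continuous_inner_of_orthogonal_eq_bot [NormedSpace 𝕜 E] [CompleteSpace E]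
    [CompleteSpace F] {f : E →ₗ[𝕜] F} {K : Submodule 𝕜 F} (hK : Kᗮ = ⊥)
    (hf : ∀ k ∈ K, Continuous fun x => inner 𝕜 k (f x)) : Continuous f := by
  refine f.continuous_of_seq_closed_graph fun u x y hu hy => ?_
  suffices y - f x ∈ Kᗮ by simpa [hK, sub_eq_zero] using this
  refine (Submodule.mem_orthogonal K _).mpr fun k hk => ?_
  have lim_inner : Filter.Tendsto (fun n => inner 𝕜 k (f (u n))) Filter.atTop
      (nhds (inner 𝕜 k y)) := tendsto_const_nhds.inner hy
  rw [inner_sub_right, sub_eq_zero]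
  exact tendsto_nhds_unique lim_inner (((hf k hk).tendsto x).comp hu)

variable [InnerProductSpace 𝕜 E] [CompleteSpace E]

theorem exists_eq_inner_add_inner [CompleteSpace F] {p : Submodule 𝕜 (E × F)}
    (l : StrongDual 𝕜 p) :
    ∃ (u : E) (v : F), ∀ x : p, l x = inner 𝕜 u x.1.1 + inner 𝕜 v x.1.2 := by
  obtain ⟨L, hL, -⟩ := exists_extension_norm_eq p l
  refine ⟨(InnerProductSpace.toDual 𝕜 E).symm (L.comp (.inl 𝕜 E F)),
    (InnerProductSpace.toDual 𝕜 F).symm (L.comp (.inr 𝕜 E F)), fun x => ?_⟩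
  simp [← hL x, ← map_add]

theorem mem_graph_adjoint_of_forall_inner_eq {A : E →ₗ.[𝕜] F}
    (hA : Dense (A.domain : Set E)) {x : F} {y : E}
    (hxy : ∀ z : A.domain, inner 𝕜 y (z : E) = inner 𝕜 x (A z)) : (x, y) ∈ A.adjoint.graph := by
  have hx : x ∈ A.adjoint.domain := A.mem_adjoint_domain_of_exists x ⟨y, hxy⟩
  rw [← LinearPMap.adjoint_apply_eq hA ⟨x, hx⟩ hxy]
  exact A.adjoint.mem_graph ⟨x, hx⟩

end General

section OperatorGraph

variable {R E F M : Type*} [Ring R] [AddCommGroup E] [Module R E] [AddCommGroup F] [Module R F]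
  [AddCommGroup M] [Module R M]

/-- A linear map `γ` on the domain of `A`, regarded as a map on the graph of `A`. Boundedness of
`γ` in the graph norm of `A` is continuity of `onGraph A γ`. -/
def onGraph (A : E →ₗ.[R] F) (γ : A.domain →ₗ[R] M) : A.graph →ₗ[R] M :=
  γ ∘ₗ ((LinearMap.fst R E F).comp A.graph.subtype).codRestrict A.domain
    fun x => LinearPMap.mem_domain_of_mem_graph x.2

theorem onGraph_mk (A : E →ₗ.[R] F) (γ : A.domain →ₗ[R] M) (x : A.domain) :
    onGraph A γ ⟨(x, A x), A.mem_graph x⟩ = γ x :=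
  rfl

end OperatorGraph

theorem mem_graph_restrictTo_iff {E : Type*} [NormedAddCommGroup E] [InnerProductSpace ℂ E]
    {A : E →ₗ.[ℂ] E} {p : Submodule ℂ A.domain} {x : E × E} :
    x ∈ (A.restrictTo p).graph ↔ ∃ z ∈ p, ((z : E), A z) = x := by
  let e := Submodule.equivMapOfInjective A.domain.subtype (Submodule.injective_subtype _) p
  have coe_e (z : p) : (e z : E) = z := rfl
  have restrictTo_apply (z : p) : A.restrictTo p (e z) = A z :=
    congrArg (fun w : p => A w) (e.symm_apply_apply z)
  calc x ∈ (A.restrictTo p).graph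
    _ ↔ ∃ y : (A.restrictTo p).domain, ((y : E), A.restrictTo p y) = x :=
      LinearPMap.mem_graph_iff' _
    _ ↔ ∃ z : p, ((e z : E), A.restrictTo p (e z)) = x := e.surjective.exists
    _ ↔ ∃ z ∈ p, ((z : E), A z) = x := by simp [coe_e, restrictTo_apply]

namespace IsGeneralizedBoundaryTriple

variable {G : Type*} [NormedAddCommGroup G] [InnerProductSpace ℂ G]
  {S St T Tt : H →ₗ.[ℂ] H} {Γ0 Γ1 : T.domain →ₗ[ℂ] G} {Γt0 Γt1 : Tt.domain →ₗ[ℂ] G}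

theorem symm (h : IsGeneralizedBoundaryTriple S St T Tt Γ0 Γ1 Γt0 Γt1) :
    IsGeneralizedBoundaryTriple St S Tt T Γt0 Γt1 Γ0 Γ1 where
  dense_S := h.dense_St
  dense_St := h.dense_S
  closed_S := h.closed_St
  closed_St := h.closed_S
  adjoint_pair f g := by
    have conj_pair := congrArg (starRingEnd ℂ) (h.adjoint_pair g f)
    simpa only [pinner, inner_conj_symm] using conj_pair.symm
  T_le := h.Tt_le
  Tt_le := h.T_le
  T_adjoint := h.Tt_adjoint
  Tt_adjoint := h.T_adjoint
  green f g := by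
    have conj_green := congrArg (starRingEnd ℂ) (h.green g f)
    simp only [pinner, map_sub, inner_conj_symm] at conj_green ⊢
    linear_combination -conj_green
  surj_Γ0 := h.surj_Γt0
  surj_Γt0 := h.surj_Γ0
  A0_adjoint := h.At0_adjoint
  At0_adjoint := h.A0_adjoint

theorem inner_boundary_eq_of_mem_ker (h : IsGeneralizedBoundaryTriple S St T Tt Γ0 Γ1 Γt0 Γt1)
    {f : T.domain} (hf : Γ0 f = 0) (g : Tt.domain) :
    ⟪Γ1 f, Γt0 g⟫ = ⟪T f, (g : H)⟫ - ⟪(f : H), Tt g⟫ := by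
  have green : ⟪(f : H), Tt g⟫ - ⟪T f, (g : H)⟫ = ⟪Γ0 f, Γt1 g⟫ - ⟪Γ1 f, Γt0 g⟫ :=
    h.symm.green g f
  rw [hf, inner_zero_left] at green
  linear_combination green

theorem isFormalAdjoint (h : IsGeneralizedBoundaryTriple S St T Tt Γ0 Γ1 Γt0 Γt1) :
    S.IsFormalAdjoint T := fun x f => by
  rw [h.T_le.2 (y := ⟨f, h.T_le.1 f.2⟩) rfl]
  exact (LinearPMap.adjoint_isFormalAdjoint h.dense_S).symm x ⟨f, h.T_le.1 f.2⟩

-- `A₀ ⊆ T ⊆ S*` gives `dom S ⊆ dom A₀* = dom Ã₀`, and `dom S` is dense.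
theorem dense_domain_restrictTo_ker (h : IsGeneralizedBoundaryTriple S St T Tt Γ0 Γ1 Γt0 Γt1) :
    Dense ((Tt.restrictTo (LinearMap.ker Γt0)).domain : Set H) := by
  refine h.dense_S.mono fun x hx => ?_
  rw [← h.A0_adjoint]
  refine LinearPMap.mem_adjoint_domain_of_exists _ ⟨S ⟨x, hx⟩, fun y => ?_⟩
  obtain ⟨f, -, hfy⟩ := mem_graph_restrictTo_iff.mp (LinearPMap.mem_graph _ y)
  obtain ⟨hf, hTf⟩ := Prod.mk.inj hfy
  rw [← hf, ← hTf]
  exact h.isFormalAdjoint ⟨x, hx⟩ f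

theorem exists_mem_ker_of_forall_inner_eq
    (h : IsGeneralizedBoundaryTriple S St T Tt Γ0 Γ1 Γt0 Γt1) {x y : H}
    (hxy : ∀ g : Tt.domain, Γt0 g = 0 → ⟪y, (g : H)⟫ = ⟪x, Tt g⟫) :
    ∃ f : T.domain, Γ0 f = 0 ∧ f = x ∧ T f = y := by
  have mem_graph : (x, y) ∈ (Tt.restrictTo (LinearMap.ker Γt0)).adjoint.graph := by
    refine mem_graph_adjoint_of_forall_inner_eq h.dense_domain_restrictTo_ker fun z => ?_
    obtain ⟨g, hg0, hgz⟩ := mem_graph_restrictTo_iff.mp (LinearPMap.mem_graph _ z)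
    obtain ⟨hg, hTg⟩ := Prod.mk.inj hgz
    rw [← hg, ← hTg]
    exact hxy g hg0
  rw [h.At0_adjoint] at mem_graph
  obtain ⟨f, hf0, hf⟩ := mem_graph_restrictTo_iff.mp mem_graph
  exact ⟨f, hf0, Prod.mk.inj hf⟩

theorem orthogonal_map_ker_eq_bot (h : IsGeneralizedBoundaryTriple S St T Tt Γ0 Γ1 Γt0 Γt1) :
    ((LinearMap.ker Γ0).map Γ1)ᗮ = ⊥ := by
  refine (Submodule.eq_bot_iff _).mpr fun ψ hψ => ?_
  obtain ⟨g, rfl⟩ := h.surj_Γt0 ψ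
  have formal_adjoint (f : T.domain) (hf : Γ0 f = 0) : ⟪Tt g, (f : H)⟫ = ⟪(g : H), T f⟫ := by
    have inner_eq_zero := hψ (Γ1 f) (Submodule.mem_map_of_mem hf)
    rw [h.inner_boundary_eq_of_mem_ker hf, sub_eq_zero] at inner_eq_zero
    rw [← inner_conj_symm, ← inner_eq_zero, inner_conj_symm]
  obtain ⟨g', hg', hgg', -⟩ := h.symm.exists_mem_ker_of_forall_inner_eq formal_adjoint
  rwa [← Subtype.ext hgg']

theorem continuous_onGraph [CompleteSpace G]
    (h : IsGeneralizedBoundaryTriple S St T Tt Γ0 Γ1 Γt0 Γt1)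
    (hTt : Tt.IsClosed) : Continuous (onGraph Tt Γt0) := by
  have : CompleteSpace Tt.graph := IsClosed.completeSpace_coe (hs := hTt)
  refine continuous_of_continuous_inner_of_orthogonal_eq_bot h.orthogonal_map_ker_eq_bot ?_
  rintro _ ⟨f, hf, rfl⟩
  have inner_eq (x : Tt.graph) :
      ⟪Γ1 f, onGraph Tt Γt0 x⟫ = ⟪T f, x.1.1⟫ - ⟪(f : H), x.1.2⟫ := by
    obtain ⟨_, hx⟩ := x
    obtain ⟨g, rfl⟩ := (LinearPMap.mem_graph_iff' _).mp hx
    rw [onGraph_mk]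
    exact h.inner_boundary_eq_of_mem_ker hf g
  simp only [inner_eq]
  fun_prop

theorem map_ker_eq_top [CompleteSpace G]
    (h : IsGeneralizedBoundaryTriple S St T Tt Γ0 Γ1 Γt0 Γt1)
    (hTt : Tt.IsClosed) : (LinearMap.ker Γ0).map Γ1 = ⊤ := by
  refine Submodule.eq_top_iff'.mpr fun φ => ?_
  let trace : Tt.graph →L[ℂ] G := ⟨onGraph Tt Γt0, h.continuous_onGraph hTt⟩
  obtain ⟨u, v, huv⟩ := exists_eq_inner_add_inner ((innerSL ℂ φ).comp trace)
  have inner_trace (g : Tt.domain) : ⟪φ, Γt0 g⟫ = ⟪u, (g : H)⟫ + ⟪v, Tt g⟫ := by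
    rw [← onGraph_mk Tt Γt0 g]
    exact huv ⟨(g, Tt g), Tt.mem_graph g⟩
  have formal_adjoint (g : Tt.domain) (hg : Γt0 g = 0) : ⟪u, (g : H)⟫ = ⟪-v, Tt g⟫ := by
    rw [inner_neg_left, eq_neg_iff_add_eq_zero, ← inner_trace, hg, inner_zero_right]
  obtain ⟨f, hf, hfv, hTf⟩ := h.exists_mem_ker_of_forall_inner_eq formal_adjoint
  refine ⟨f, hf, ext_inner_right ℂ fun ψ => ?_⟩
  obtain ⟨g, rfl⟩ := h.surj_Γt0 ψ
  rw [h.inner_boundary_eq_of_mem_ker hf, inner_trace, hfv, hTf, inner_neg_left, sub_neg_eq_add]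

end IsGeneralizedBoundaryTriple

theorem stmt4_general {S St T Tt : H →ₗ.[ℂ] H}
    {Γ0 Γ1 : T.domain →ₗ[ℂ] G} {Γt0 Γt1 : Tt.domain →ₗ[ℂ] G}
    (hgbt : IsGeneralizedBoundaryTriple S St T Tt Γ0 Γ1 Γt0 Γt1) (hTt : Tt.IsClosed) :
    Set.range (fun f : T.domain => (Γ0 f, Γ1 f)) = (Set.univ : Set (G × G)) := by
  refine Set.eq_univ_of_forall fun ⟨a, b⟩ => ?_
  obtain ⟨f, hf⟩ := hgbt.surj_Γ0 a
  obtain ⟨k, hk0, hk1⟩ : b - Γ1 f ∈ (LinearMap.ker Γ0).map Γ1 := by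
    simp only [hgbt.map_ker_eq_top hTt, Submodule.mem_top]
  exact ⟨f + k, by simp [hf, hk1, LinearMap.mem_ker.mp hk0]⟩

theorem stmt4
    (S St T Tt : H →ₗ.[ℂ] H)
    (Γ0 Γ1 : T.domain →ₗ[ℂ] G) (Γt0 Γt1 : Tt.domain →ₗ[ℂ] G)
    (hgbt : IsGeneralizedBoundaryTriple S St T Tt Γ0 Γ1 Γt0 Γt1)
    (hT : T = S.adjoint) (hTt : Tt = St.adjoint) :
    Set.range (fun f : T.domain => (Γ0 f, Γ1 f)) = (Set.univ : Set (G × G)) ∧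
    Set.range (fun g : Tt.domain => (Γt0 g, Γt1 g)) = (Set.univ : Set (G × G)) := by
  exact ⟨stmt4_general hgbt (hTt ▸ LinearPMap.adjoint_isClosed hgbt.dense_St),
    stmt4_general hgbt.symm (hT ▸ LinearPMap.adjoint_isClosed hgbt.dense_S)⟩

end
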